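/- Let l > 0, n ∈ ℕ with n ≥ 1, and let u be the vortex map on B_l. Let (u_k) be Lipschitz maps from B_l into the closed unit disc of ℝ² with sup_k ∫_{B_l} |∇u_k| dx < ∞. Let (λ_k) ⊂ (0, 2) be strictly decreasing with λ_k → 0, such that ℋ¹({x ∈ B_l \ {0} : |u_k(x) − u(x)| = λ_k}) < ∞ for every k and λ_k · ℋ¹({x ∈ B_l \ {0} : |u_k(x) − u(x)| = λ_k}) → 0. Set D_k := {x ∈ B_l \ {0} : |u_k(x) − u(x)| > λ_k}. Assume there is a measurable ζ : B_l → [0, 1] with ∫_{B_l} ζ dx ≤ 1/n such that ∫_{D_k} g dx → ∫_{B_l} ζ g dx for every g ∈ L¹(B_l). Then for every ε ∈ (0, l): liminf_{k→∞} ∫_{B_l \ D_k} √(1 + |∇u_k(x)|² + (det ∇u_k(x))²) dx ≥ ∫_{B_l \ closure(B_ε)} √(1 + |∇u(x)|²) dx − 1/n − 2/(εn). -/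

import Mathlib

open MeasureTheory Filter Metric Topology
open scoped ENNReal NNReal

noncomputable section

abbrev V2 : Type := EuclideanSpace ℝ (Fin 2)

/-- Squared Frobenius norm of (the matrix of) a continuous linear map on `ℝ²`. -/
def frobSq (L : V2 →L[ℝ] V2) : ℝ :=
  ∑ i : Fin 2, ∑ j : Fin 2, (L (EuclideanSpace.single j 1) i) ^ 2

/-- Determinant of (the matrix of) a continuous linear map on `ℝ²`. -/
def detJ (L : V2 →L[ℝ] V2) : ℝ :=
  L (EuclideanSpace.single 0 1) 0 * L (EuclideanSpace.single 1 1) 1 -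
    L (EuclideanSpace.single 1 1) 0 * L (EuclideanSpace.single 0 1) 1

/-- The vortex map `x ↦ x / |x|` (equal to `0` at the origin). -/
def vortex (x : V2) : V2 := ‖x‖⁻¹ • x

/-- The area integrand `√(1 + |∇v|² + (det ∇v)²)`. -/
def areaIntegrand (v : V2 → V2) (x : V2) : ℝ :=
  Real.sqrt (1 + frobSq (fderiv ℝ v x) + detJ (fderiv ℝ v x) ^ 2)

/-- Area of the graph of `v` over the set `E`. -/
def graphArea (v : V2 → V2) (E : Set V2) : ℝ≥0∞ :=
  ∫⁻ x in E, ENNReal.ofReal (areaIntegrand v x)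

/-- `∫_{B_l} √(1 + |∇u|²) dx` for the vortex map `u`. -/
def vortexGradArea (l : ℝ) : ℝ≥0∞ :=
  ∫⁻ x in ball (0 : V2) l, ENNReal.ofReal (Real.sqrt (1 + frobSq (fderiv ℝ vortex x)))

/-- The `L¹`-relaxed area of the graph of the vortex map over `B_l`:
the infimum of `liminf_k 𝒜(v_k, B_l)` over all sequences `(v_k)` of maps that are
`C¹` on `B_l` and converge to the vortex map in `L¹(B_l, ℝ²)`. -/
def relaxedArea (l : ℝ) : ℝ≥0∞ :=
  sInf { a : ℝ≥0∞ | ∃ v : ℕ → V2 → V2,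
    (∀ k, ContDiffOn ℝ 1 (v k) (ball (0 : V2) l)) ∧
    Tendsto (fun k => ∫⁻ x in ball (0 : V2) l, ENNReal.ofReal ‖v k x - vortex x‖)
      atTop (𝓝 0) ∧
    a = Filter.liminf (fun k => graphArea (v k) (ball (0 : V2) l)) atTop }

/-!
The graph of the vortex map `u` is calibrated by angular momentum. Let `R` be the rotation by a
quarter turn and `F(x) = Rx / (|x|² √(1 + |x|²))`. By Cauchy-Schwarz every map `w` satisfies
`√(1 + |∇u|²) + ∂_{Rx}(F · w) ≤ √(1 + |∇w|² + (det ∇w)²) + |w - u| / |x|`,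
with equality for `w = u`.

The field `x ↦ Rx` is divergence free, so the derivative term integrates to zero once `F · w` is
multiplied by a Lipschitz cutoff `ψ` vanishing near the frontier of the set `A` where the
comparison takes place, here the part of `{|w - u| < λ}` in the annulus of radii `ε` and `l`.
Since `F ⊥ u`, the function `F · w` has size `λ/ε` on `A`. Covering `∂A` by balls of radius at
most `λ` gives a `ψ` with `∫ |∇ψ| ≲ ℋ¹(∂A) + 1` and `∫ (1 - ψ) ≲ λ (ℋ¹(∂A) + 1)`, so the cutoff
costs `O(λ (ℋ¹(∂A) + 1))`, which vanishes along the sequence. Off `A`, up to a null set, the annulus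
lies in the bad set `D`, where `√(1 + |∇u|²) ≤ 1 + 1/ε`.
-/

/-! ### Cutoffs near a set of finite one-dimensional Hausdorff measure -/

lemma exists_ball_superset {X : Type*} [PseudoMetricSpace X] [Nonempty X] {s : Set X}
    (hs : ediam s ≠ ⊤) {η : ℝ} (hη : 0 < η) : ∃ c, s ⊆ ball c ((ediam s).toReal + η) := by
  rcases s.eq_empty_or_nonempty with rfl | ⟨c, hc⟩
  · exact ⟨Classical.arbitrary X, Set.empty_subset _⟩
  · refine ⟨c, fun x hx => ?_⟩
    have hle := ENNReal.toReal_mono hs (edist_le_ediam_of_mem hx hc)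
    rw [mem_ball, dist_edist]
    linarith

section Covering

variable {X : Type*} [MetricSpace X] [MeasurableSpace X] [BorelSpace X]

lemma exists_cover_tsum_ediam_lt {S : Set X} {b δ : ℝ≥0∞} (hb : μH[1] S < b) (hδ : 0 < δ) :
    ∃ t : ℕ → Set X, S ⊆ ⋃ i, t i ∧ (∀ i, ediam (t i) ≤ δ) ∧ ∑' i, ediam (t i) < b := by
  have hinf := lt_of_le_of_lt (le_iSup₂ (f := fun (ρ : ℝ≥0∞) (_ : 0 < ρ) =>
    ⨅ (t : ℕ → Set X) (_ : S ⊆ ⋃ i, t i) (_ : ∀ i, ediam (t i) ≤ ρ),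
      ∑' i, ⨆ _ : (t i).Nonempty, ediam (t i) ^ (1 : ℝ)) δ hδ)
    ((Measure.hausdorffMeasure_apply (1 : ℝ) S).symm.trans_lt hb)
  simp only [iInf_lt_iff, ENNReal.rpow_one] at hinf
  obtain ⟨t, hcov, hdiam, hsum⟩ := hinf
  refine ⟨t, hcov, hdiam, lt_of_le_of_lt (ENNReal.tsum_le_tsum fun i => ?_) hsum⟩
  rcases (t i).eq_empty_or_nonempty with h | h <;> simp [h]

lemma exists_finset_ball_cover_sum_le [Nonempty X] {S : Set X} (hS : IsCompact S)
    (hfin : μH[1] S < ⊤) {δ : ℝ} (hδ : 0 < δ) :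
    ∃ (s : Finset ℕ) (c : ℕ → X) (r : ℕ → ℝ), (∀ i, 0 < r i ∧ r i ≤ δ) ∧
      S ⊆ ⋃ i ∈ s, ball (c i) (r i) ∧ ∑ i ∈ s, r i ≤ (μH[1] S).toReal + 1 := by
  obtain ⟨t, hcov, hdiam, hsum⟩ := exists_cover_tsum_ediam_lt
    (b := μH[1] S + ENNReal.ofReal (1 / 2)) (ENNReal.lt_add_right hfin.ne (by norm_num))
    (ENNReal.ofReal_pos.2 (half_pos hδ))
  have hdiam_fin : ∀ i, ediam (t i) ≠ ⊤ := fun i => ((hdiam i).trans_lt ENNReal.ofReal_lt_top).ne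
  obtain ⟨η, hη_pos, m, hη_sum, hm⟩ := NNReal.exists_pos_sum_of_countable
    (ε := (min (δ / 2) (1 / 2)).toNNReal) (by simpa using hδ) ℕ
  have hη_le : ∀ s : Finset ℕ, ∑ i ∈ s, (η i : ℝ) ≤ min (δ / 2) (1 / 2) := fun s =>
    le_trans (by exact_mod_cast sum_le_hasSum s (fun _ _ => zero_le) hη_sum)
      (Real.lt_toNNReal_iff_coe_lt.1 hm).le
  choose c hc using fun i => exists_ball_superset (hdiam_fin i) (NNReal.coe_pos.2 (hη_pos i))
  obtain ⟨s, hs⟩ := hS.elim_finite_subcover _ (fun i => isOpen_ball)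
    (hcov.trans (Set.iUnion_mono hc))
  refine ⟨s, c, _, fun i => ⟨?_, ?_⟩, hs, ?_⟩
  · exact add_pos_of_nonneg_of_pos ENNReal.toReal_nonneg (NNReal.coe_pos.2 (hη_pos i))
  · have h_diam := ENNReal.toReal_le_of_le_ofReal (half_pos hδ).le (hdiam i)
    have h_slack := (hη_le {i}).trans (min_le_left _ _)
    rw [Finset.sum_singleton] at h_slack
    linarith
  · have h_diam : ∑ i ∈ s, (ediam (t i)).toReal ≤ (μH[1] S).toReal + 1 / 2 := by
      rw [← ENNReal.toReal_sum fun i _ => hdiam_fin i, ← ENNReal.toReal_ofReal one_half_pos.le,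
        ← ENNReal.toReal_add hfin.ne ENNReal.ofReal_ne_top]
      exact ENNReal.toReal_mono (by finiteness) ((ENNReal.sum_le_tsum s).trans hsum.le)
    rw [Finset.sum_add_distrib]
    linarith [(hη_le s).trans (min_le_right _ _)]

end Covering

section BallsCutoff

variable {E : Type*} [NormedAddCommGroup E] {ι : Type*}

/-- The tent function equal to `1` on the ball of radius `r` around `c`, to `0` off the ball of
radius `2 * r`, and affine in the distance to `c` in between. -/
def ballBump (c : E) (r : ℝ) (x : E) : ℝ := max 0 (min 1 (2 - dist x c / r))

/-- A Lipschitz cutoff that vanishes on all the balls `ball (c i) (r i)` with `i ∈ s` and equals `1`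
off their doubles. -/
def ballsCutoff (s : Finset ι) (c : ι → E) (r : ι → ℝ) (x : E) : ℝ :=
  max 0 (1 - ∑ i ∈ s, ballBump (c i) (r i) x)

lemma ballBump_nonneg (c : E) (r : ℝ) (x : E) : 0 ≤ ballBump c r x := le_max_left _ _

lemma ballBump_eq_one {c : E} {r : ℝ} {x : E} (hr : 0 < r) (hx : x ∈ ball c r) :
    ballBump c r x = 1 := by
  have hdist : dist x c / r ≤ 1 := (div_le_one hr).2 (mem_ball.1 hx).le
  rw [ballBump, min_eq_left (by linarith), max_eq_right zero_le_one]

lemma ballBump_eq_zero {c : E} {r : ℝ} {x : E} (hr : 0 < r) (hx : x ∉ closedBall c (2 * r)) :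
    ballBump c r x = 0 := by
  have hdist : 2 ≤ dist x c / r := (le_div_iff₀ hr).2 (not_le.1 hx).le
  exact max_eq_left ((min_le_right _ _).trans (by linarith))

lemma ballBump_le_indicator (c : E) {r : ℝ} (hr : 0 < r) (x : E) :
    ballBump c r x ≤ (closedBall c (2 * r)).indicator 1 x := by
  by_cases hx : x ∈ closedBall c (2 * r)
  · simp [hx, ballBump]
  · simp [hx, ballBump_eq_zero hr hx]

lemma abs_ballBump_sub_le (c : E) {r : ℝ} (hr : 0 < r) (x y : E) :
    |ballBump c r x - ballBump c r y| ≤ 1 / r * ‖x - y‖ := by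
  have hlip : |dist y c / r - dist x c / r| ≤ 1 / r * ‖x - y‖ := by
    rw [← sub_div, abs_div, abs_of_pos hr, one_div_mul_eq_div, ← dist_eq_norm, dist_comm x y]
    gcongr
    exact abs_dist_sub_le y x c
  have hmax := abs_max_sub_max_le_max 0 (min 1 (2 - dist x c / r)) 0 (min 1 (2 - dist y c / r))
  have hmin := abs_min_sub_min_le_max 1 (2 - dist x c / r) 1 (2 - dist y c / r)
  simp only [sub_self, abs_zero, abs_nonneg, max_eq_right, sub_sub_sub_cancel_left] at hmax hmin
  exact hmax.trans (hmin.trans hlip)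

lemma eventually_abs_ballBump_sub_le (c : E) {r : ℝ} (hr : 0 < r) (x : E) :
    ∀ᶠ y in 𝓝 x, |ballBump c r y - ballBump c r x| ≤
      (closedBall c (2 * r)).indicator (fun _ => 1 / r) x * ‖y - x‖ := by
  by_cases hx : x ∈ closedBall c (2 * r)
  · exact Eventually.of_forall fun y => by simpa [hx] using abs_ballBump_sub_le c hr y x
  · filter_upwards [isClosed_closedBall.isOpen_compl.mem_nhds hx] with y hy
    simp [hx, ballBump_eq_zero hr hx, ballBump_eq_zero hr hy]

variable (s : Finset ι) (c : ι → E) {r : ι → ℝ}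

lemma ballsCutoff_mem_Icc (r : ι → ℝ) (x : E) : ballsCutoff s c r x ∈ Set.Icc 0 1 :=
  ⟨le_max_left _ _, max_le zero_le_one
    (sub_le_self _ (Finset.sum_nonneg fun _ _ => ballBump_nonneg _ _ _))⟩

lemma ballsCutoff_eq_zero (hr : ∀ i, 0 < r i) {x : E} (hx : x ∈ ⋃ i ∈ s, ball (c i) (r i)) :
    ballsCutoff s c r x = 0 := by
  simp only [Set.mem_iUnion, exists_prop] at hx
  obtain ⟨i, hi, hxi⟩ := hx
  have hsum := Finset.single_le_sum (fun j _ => ballBump_nonneg (c j) (r j) x) hi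
  rw [ballBump_eq_one (hr i) hxi] at hsum
  exact max_eq_left (sub_nonpos.2 hsum)

lemma one_sub_ballsCutoff_le (hr : ∀ i, 0 < r i) (x : E) :
    1 - ballsCutoff s c r x ≤ ∑ i ∈ s, (closedBall (c i) (2 * r i)).indicator 1 x :=
  calc 1 - ballsCutoff s c r x ≤ ∑ i ∈ s, ballBump (c i) (r i) x := by
        have := le_max_right 0 (1 - ∑ i ∈ s, ballBump (c i) (r i) x)
        rw [ballsCutoff]; linarith
    _ ≤ _ := Finset.sum_le_sum fun i _ => ballBump_le_indicator _ (hr i) x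

lemma abs_ballsCutoff_sub_le (r : ι → ℝ) (x y : E) :
    |ballsCutoff s c r x - ballsCutoff s c r y| ≤
      ∑ i ∈ s, |ballBump (c i) (r i) x - ballBump (c i) (r i) y| := by
  have hmax := abs_max_sub_max_le_max 0 (1 - ∑ i ∈ s, ballBump (c i) (r i) y)
    0 (1 - ∑ i ∈ s, ballBump (c i) (r i) x)
  simp only [sub_self, abs_zero, abs_nonneg, max_eq_right, sub_sub_sub_cancel_left,
    ← Finset.sum_sub_distrib] at hmax
  rw [abs_sub_comm]
  exact hmax.trans (Finset.abs_sum_le_sum_abs _ _)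

lemma exists_lipschitzWith_ballsCutoff (hr : ∀ i, 0 < r i) :
    ∃ C, LipschitzWith C (ballsCutoff s c r) :=
  ⟨_, LipschitzWith.of_dist_le' (K := ∑ i ∈ s, 1 / r i) fun x y => by
    rw [Real.dist_eq, dist_eq_norm, Finset.sum_mul]
    exact (abs_ballsCutoff_sub_le s c r x y).trans
      (Finset.sum_le_sum fun i _ => abs_ballBump_sub_le (c i) (hr i) x y)⟩

lemma norm_fderiv_ballsCutoff_le [NormedSpace ℝ E] (hr : ∀ i, 0 < r i) (x : E) :
    ‖fderiv ℝ (ballsCutoff s c r) x‖ ≤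
      ∑ i ∈ s, (closedBall (c i) (2 * r i)).indicator (fun _ => 1 / r i) x := by
  refine norm_fderiv_le_of_lip' ℝ (Finset.sum_nonneg fun i _ =>
    Set.indicator_nonneg (fun _ _ => (one_div_pos.2 (hr i)).le) x) ?_
  filter_upwards [(Finset.eventually_all s).2 fun i _ =>
    eventually_abs_ballBump_sub_le (c i) (hr i) x] with y hy
  rw [Finset.sum_mul]
  exact (abs_ballsCutoff_sub_le s c r y x).trans (Finset.sum_le_sum hy)

end BallsCutoff

lemma lintegral_ofReal_sum_indicator_closedBall_le {ι : Type*} (s : Finset ι) (c : ι → V2)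
    {r b : ι → ℝ} {M : ℝ} (hr : ∀ i, 0 ≤ r i) (hb : ∀ i, 0 ≤ b i)
    (hM : ∑ i ∈ s, r i ^ 2 * b i ≤ M) :
    ∫⁻ x, ENNReal.ofReal (∑ i ∈ s, (closedBall (c i) (r i)).indicator (fun _ => b i) x) ≤
      ENNReal.ofReal (Real.pi * M) := by
  have hind : ∀ i x, (closedBall (c i) (r i)).indicator (fun _ => ENNReal.ofReal (b i)) x =
      ENNReal.ofReal ((closedBall (c i) (r i)).indicator (fun _ => b i) x) := fun i x => by
    by_cases hx : x ∈ closedBall (c i) (r i) <;> simp [hx]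
  calc _ = ∑ i ∈ s, ∫⁻ x, (closedBall (c i) (r i)).indicator (fun _ => ENNReal.ofReal (b i)) x := by
        rw [← lintegral_finsetSum _ fun i _ => measurable_const.indicator measurableSet_closedBall]
        refine lintegral_congr fun x => ?_
        rw [ENNReal.ofReal_sum_of_nonneg fun i _ => Set.indicator_nonneg (fun _ _ => hb i) x]
        exact Finset.sum_congr rfl fun i _ => (hind i x).symm
    _ = ENNReal.ofReal (∑ i ∈ s, b i * (r i ^ 2 * Real.pi)) := by
        rw [ENNReal.ofReal_sum_of_nonneg fun i _ =>
          mul_nonneg (hb i) (mul_nonneg (sq_nonneg _) Real.pi_pos.le)]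
        refine Finset.sum_congr rfl fun i _ => ?_
        rw [lintegral_indicator_const measurableSet_closedBall,
          EuclideanSpace.volume_closedBall_fin_two, ENNReal.ofReal_mul (hb i),
          ENNReal.ofReal_mul (sq_nonneg _), ENNReal.ofReal_pow (hr i)]
    _ ≤ ENNReal.ofReal (Real.pi * M) := by
        refine ENNReal.ofReal_le_ofReal ?_
        rw [← mul_le_mul_iff_right₀ Real.pi_pos, Finset.mul_sum] at hM
        exact (Finset.sum_congr rfl fun i _ => by ring).trans_le hM

lemma exists_cutoff_of_hausdorffMeasure_lt_top {S : Set V2} (hS : IsCompact S) (hfin : μH[1] S < ⊤)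
    {δ : ℝ} (hδ : 0 < δ) :
    ∃ (ψ : V2 → ℝ) (C : ℝ≥0) (U : Set V2), LipschitzWith C ψ ∧ (∀ x, ψ x ∈ Set.Icc 0 1) ∧
      IsOpen U ∧ S ⊆ U ∧ (∀ x ∈ U, ψ x = 0) ∧
      ∫⁻ x, ENNReal.ofReal (1 - ψ x) ≤
        ENNReal.ofReal (4 * Real.pi * δ * ((μH[1] S).toReal + 1)) ∧
      ∫⁻ x, ENNReal.ofReal ‖fderiv ℝ ψ x‖ ≤
        ENNReal.ofReal (4 * Real.pi * ((μH[1] S).toReal + 1)) := by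
  obtain ⟨s, c, r, hr, hcov, hsum⟩ := exists_finset_ball_cover_sum_le hS hfin hδ
  have hr0 : ∀ i, 0 < r i := fun i => (hr i).1
  have h2r : ∀ i, 0 ≤ 2 * r i := fun i => by linarith [hr0 i]
  obtain ⟨C, hC⟩ := exists_lipschitzWith_ballsCutoff s c hr0
  refine ⟨ballsCutoff s c r, C, _, hC, ballsCutoff_mem_Icc s c r,
    isOpen_biUnion fun i _ => isOpen_ball, hcov, fun x => ballsCutoff_eq_zero s c hr0, ?_, ?_⟩
  · refine (lintegral_mono fun x => ENNReal.ofReal_le_ofReal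
      (one_sub_ballsCutoff_le s c hr0 x)).trans
      ((lintegral_ofReal_sum_indicator_closedBall_le s c h2r (fun _ => zero_le_one)
        (M := 4 * δ * ((μH[1] S).toReal + 1)) ?_).trans_eq (by congr 1; ring))
    calc ∑ i ∈ s, (2 * r i) ^ 2 * 1 ≤ ∑ i ∈ s, 4 * δ * r i :=
          Finset.sum_le_sum fun i _ => by nlinarith [hr i]
      _ ≤ _ := by rw [← Finset.mul_sum]; gcongr
  · refine (lintegral_mono fun x => ENNReal.ofReal_le_ofReal
      (norm_fderiv_ballsCutoff_le s c hr0 x)).trans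
      ((lintegral_ofReal_sum_indicator_closedBall_le s c h2r (fun i => (one_div_pos.2 (hr0 i)).le)
        (M := 4 * ((μH[1] S).toReal + 1)) ?_).trans_eq (by congr 1; ring))
    calc ∑ i ∈ s, (2 * r i) ^ 2 * (1 / r i) = ∑ i ∈ s, 4 * r i :=
          Finset.sum_congr rfl fun i _ => by field_simp [(hr0 i).ne']; norm_num
      _ ≤ _ := by rw [← Finset.mul_sum]; gcongr

/-! ### Integration by parts along a linear vector field -/

section Indicator

variable {E F : Type*} [NormedAddCommGroup E] [NormedSpace ℝ E] [NormedAddCommGroup F]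

lemma exists_mem_segment_inter {A U : Set E} (hA : IsOpen A) (hU : IsOpen U) (hAU : frontier A ⊆ U)
    {x y : E} (hx : x ∈ A) (hy : y ∉ A) : ∃ z ∈ segment ℝ x y, z ∈ A ∩ U := by
  have hcover : segment ℝ x y ⊆ A ∪ (U ∪ (closure A)ᶜ) := fun z _ => by
    by_cases hzA : z ∈ A
    · exact Or.inl hzA
    · by_cases hz : z ∈ closure A
      · exact Or.inr (Or.inl (hAU (hA.frontier_eq ▸ ⟨hz, hzA⟩)))
      · exact Or.inr (Or.inr hz)
  have hy' : y ∈ U ∪ (closure A)ᶜ := (hcover (right_mem_segment ℝ x y)).resolve_left hy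
  obtain ⟨z, hz, hzA, hzU⟩ := (convex_segment x y).isPreconnected A (U ∪ (closure A)ᶜ) hA
    (hU.union isClosed_closure.isOpen_compl) hcover ⟨x, left_mem_segment ℝ x y, hx⟩
    ⟨y, right_mem_segment ℝ x y, hy'⟩
  exact ⟨z, hz, hzA, hzU.resolve_right fun h => h (subset_closure hzA)⟩

lemma lipschitzWith_indicator_of_lipschitzOnWith {A U : Set E} {f : E → F} {C : ℝ≥0}
    (hf : LipschitzOnWith C f A) (hA : IsOpen A) (hU : IsOpen U) (hAU : frontier A ⊆ U)
    (hfU : ∀ x ∈ A ∩ U, f x = 0) :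
    LipschitzWith C (A.indicator f) := by
  have hout : ∀ x ∈ A, ∀ y ∉ A, ‖f x‖ ≤ C * dist x y := fun x hx y hy => by
    obtain ⟨z, hz, hzAU⟩ := exists_mem_segment_inter hA hU hAU hx hy
    have hxz : dist x z ≤ dist x y := by
      linarith [dist_add_dist_of_mem_segment hz, dist_nonneg (x := z) (y := y)]
    calc ‖f x‖ = dist (f x) (f z) := by rw [hfU z hzAU, dist_zero_right]
      _ ≤ C * dist x z := hf.dist_le_mul x hx z hzAU.1
      _ ≤ C * dist x y := by gcongr
  refine LipschitzWith.of_dist_le_mul fun x y => ?_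
  by_cases hx : x ∈ A <;> by_cases hy : y ∈ A
  · simpa [hx, hy] using hf.dist_le_mul x hx y hy
  · simpa [hx, hy] using hout x hx y hy
  · simpa [hx, hy, dist_comm] using hout y hy x hx
  · simpa [hx, hy] using mul_nonneg C.2 dist_nonneg

lemma fderiv_indicator [NormedSpace ℝ F] {A U : Set E} {f : E → F} (hA : IsOpen A) (hU : IsOpen U)
    (hAU : frontier A ⊆ U) (hfU : ∀ x ∈ A ∩ U, f x = 0) (x : E) :
    fderiv ℝ (A.indicator f) x = A.indicator (fderiv ℝ f) x := by
  by_cases hx : x ∈ A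
  · rw [Set.indicator_of_mem hx]
    exact (Set.eqOn_indicator.eventuallyEq_of_mem (hA.mem_nhds hx)).fderiv_eq
  · have hx' : U ∪ (closure A)ᶜ ∈ 𝓝 x :=
      (hU.union isClosed_closure.isOpen_compl).mem_nhds <| or_iff_not_imp_right.2 fun h =>
        hAU (hA.frontier_eq ▸ ⟨not_not.1 h, hx⟩)
    have hzero : A.indicator f =ᶠ[𝓝 x] fun _ => 0 := by
      filter_upwards [hx'] with y hy
      by_cases hyA : y ∈ A
      · rw [Set.indicator_of_mem hyA]
        exact hfU y ⟨hyA, hy.resolve_right fun h => h (subset_closure hyA)⟩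
      · exact Set.indicator_of_notMem hyA f
    rw [hzero.fderiv_eq, Set.indicator_of_notMem hx, fderiv_const_apply]

end Indicator

lemma exists_lipschitzOnWith_of_isCompact {E F : Type*} [NormedAddCommGroup E] [NormedSpace ℝ E]
    [NormedAddCommGroup F] [NormedSpace ℝ F] {K : Set E} {f : E → F} (hK : IsCompact K)
    (hf : ∀ x ∈ K, ContDiffAt ℝ 1 f x) : ∃ C, LipschitzOnWith C f K :=
  LocallyLipschitzOn.exists_lipschitzOnWith_of_compact hK fun x hx => by
    obtain ⟨C, t, ht, hC⟩ := (hf x hx).exists_lipschitzOnWith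
    exact ⟨C, t, mem_nhdsWithin_of_mem_nhds ht, hC⟩

section Divergence

variable {E : Type*} [NormedAddCommGroup E] [NormedSpace ℝ E] {g : E → ℝ} {C : ℝ≥0}

lemma fderiv_apply_clm_eq_sum {ι : Type*} [Fintype ι] (b : Module.Basis ι ℝ E) (S : E →L[ℝ] E)
    (x : E) : fderiv ℝ g x (S x) = ∑ i, b.coord i (S x) * fderiv ℝ g x (b i) := by
  conv_lhs => rw [← b.sum_repr (S x)]
  simp only [map_sum, map_smul, smul_eq_mul, Module.Basis.coord_apply]

variable [MeasurableSpace E] [BorelSpace E] {μ : Measure E}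

lemma integrable_continuous_mul_fderiv [IsFiniteMeasureOnCompacts μ] (hg : LipschitzWith C g)
    (hc : HasCompactSupport g) {f : E → ℝ} (hf : Continuous f) (v : E) :
    Integrable (fun x => f x * fderiv ℝ g x v) μ := by
  have hcomp : HasCompactSupport fun x => fderiv ℝ g x v := hc.fderiv_apply ℝ v
  have hint : Integrable (fun x => fderiv ℝ g x v) μ :=
    memLp_one_iff_integrable.1 <| hcomp.memLp_of_bound
      (measurable_fderiv_apply_const ℝ g v).aestronglyMeasurable (C * ‖v‖) <| .of_forall fun x =>
        (fderiv ℝ g x).le_of_opNorm_le (norm_fderiv_le_of_lipschitz ℝ hg) v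
  rw [← integrableOn_iff_integrable_of_support_subset
    ((Function.support_mul_subset_right _ _).trans (subset_tsupport _))]
  exact hint.integrableOn.continuousOn_mul hf.continuousOn hcomp

variable [FiniteDimensional ℝ E] [μ.IsAddHaarMeasure]

lemma integral_clm_mul_fderiv (hg : LipschitzWith C g) (hc : HasCompactSupport g)
    (φ : E →L[ℝ] ℝ) (v : E) : ∫ x, φ x * fderiv ℝ g x v ∂μ = -(φ v) * ∫ x, g x ∂μ := by
  have hparts := LipschitzWith.integral_lineDeriv_mul_eq (μ := μ) φ.lipschitz hg hc v
  have hφ : ∀ x, lineDeriv ℝ φ x v = φ v := fun x => by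
    rw [φ.differentiableAt.lineDeriv_eq_fderiv, φ.fderiv]
  have hg' : ∫ x, lineDeriv ℝ g x (-v) * φ x ∂μ = -∫ x, φ x * fderiv ℝ g x v ∂μ := by
    rw [← integral_neg]
    refine integral_congr_ae (hg.ae_differentiableAt.mono fun x hx => ?_)
    simp only [hx.lineDeriv_eq_fderiv, map_neg]
    ring
  simp only [hφ, integral_const_mul] at hparts
  linarith

lemma integrable_fderiv_apply_clm (hg : LipschitzWith C g) (hc : HasCompactSupport g)
    (S : E →L[ℝ] E) : Integrable (fun x => fderiv ℝ g x (S x)) μ := by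
  simp only [fderiv_apply_clm_eq_sum (Module.finBasis ℝ E) S]
  exact integrable_finsetSum _ fun i _ => integrable_continuous_mul_fderiv hg hc
    ((LinearMap.continuous_of_finiteDimensional _).comp S.continuous) _

theorem integral_fderiv_apply_clm (hg : LipschitzWith C g) (hc : HasCompactSupport g)
    (S : E →L[ℝ] E) :
    ∫ x, fderiv ℝ g x (S x) ∂μ = -(LinearMap.trace ℝ E S) * ∫ x, g x ∂μ := by
  let b := Module.finBasis ℝ E
  let φ i : E →L[ℝ] ℝ := (LinearMap.toContinuousLinearMap (b.coord i)).comp S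
  have htrace : LinearMap.trace ℝ E S = ∑ i, φ i (b i) := by
    simp only [LinearMap.trace_eq_matrix_trace ℝ b, Matrix.trace, Matrix.diag,
      LinearMap.toMatrix_apply]
    rfl
  calc ∫ x, fderiv ℝ g x (S x) ∂μ = ∑ i, ∫ x, φ i x * fderiv ℝ g x (b i) ∂μ := by
        simp only [fderiv_apply_clm_eq_sum b S]
        exact integral_finsetSum _ fun i _ =>
          integrable_continuous_mul_fderiv hg hc (φ i).continuous _
    _ = -(LinearMap.trace ℝ E S) * ∫ x, g x ∂μ := by
        simp only [integral_clm_mul_fderiv hg hc, htrace, ← Finset.sum_mul, Finset.sum_neg_distrib]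

end Divergence

section IndicatorDivergence

variable {E : Type*} [NormedAddCommGroup E] [NormedSpace ℝ E] {A U : Set E} {g : E → ℝ} {C : ℝ≥0}

lemma indicator_fderiv_apply (hA : IsOpen A) (hU : IsOpen U) (hAU : frontier A ⊆ U)
    (hgU : ∀ x ∈ A ∩ U, g x = 0) (S : E →L[ℝ] E) :
    A.indicator (fun x => fderiv ℝ g x (S x)) = fun x => fderiv ℝ (A.indicator g) x (S x) := by
  ext x
  rw [fderiv_indicator hA hU hAU hgU]
  by_cases hx : x ∈ A <;> simp [hx]

variable [FiniteDimensional ℝ E]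

lemma hasCompactSupport_indicator (hA : Bornology.IsBounded A) :
    HasCompactSupport (A.indicator g) :=
  HasCompactSupport.intro hA.isCompact_closure fun _ hx =>
    Set.indicator_of_notMem (fun h => hx (subset_closure h)) g

variable [MeasurableSpace E] [BorelSpace E] {μ : Measure E} [μ.IsAddHaarMeasure]

lemma integrableOn_fderiv_apply_clm (hg : LipschitzOnWith C g A) (hA : IsOpen A)
    (hAb : Bornology.IsBounded A) (hU : IsOpen U) (hAU : frontier A ⊆ U)
    (hgU : ∀ x ∈ A ∩ U, g x = 0) (S : E →L[ℝ] E) :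
    IntegrableOn (fun x => fderiv ℝ g x (S x)) A μ := by
  rw [← integrable_indicator_iff hA.measurableSet, indicator_fderiv_apply hA hU hAU hgU S]
  exact integrable_fderiv_apply_clm (lipschitzWith_indicator_of_lipschitzOnWith hg hA hU hAU hgU)
    (hasCompactSupport_indicator hAb) S

lemma setIntegral_fderiv_apply_clm (hg : LipschitzOnWith C g A) (hA : IsOpen A)
    (hAb : Bornology.IsBounded A) (hU : IsOpen U) (hAU : frontier A ⊆ U)
    (hgU : ∀ x ∈ A ∩ U, g x = 0) (S : E →L[ℝ] E) :
    ∫ x in A, fderiv ℝ g x (S x) ∂μ = -(LinearMap.trace ℝ E S) * ∫ x in A, g x ∂μ := by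
  rw [← integral_indicator hA.measurableSet, ← integral_indicator hA.measurableSet,
    indicator_fderiv_apply hA hU hAU hgU S]
  exact integral_fderiv_apply_clm (lipschitzWith_indicator_of_lipschitzOnWith hg hA hU hAU hgU)
    (hasCompactSupport_indicator hAb) S

end IndicatorDivergence

/-! ### The calibration of the vortex map -/

open scoped RealInnerProductSpace

/-- The rotation of the plane by a quarter turn. -/
def rot : V2 →L[ℝ] V2 := Matrix.toEuclideanCLM (𝕜 := ℝ) !![0, -1; 1, 0]

lemma rot_apply (x : V2) : rot x = !₂[-x 1, x 0] := by
  ext i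
  fin_cases i <;> simp [rot, Matrix.ofLp_toEuclideanCLM, Matrix.vecHead, Matrix.vecTail]

lemma rot_rot (x : V2) : rot (rot x) = -x := by
  ext i
  fin_cases i <;> simp [rot_apply]

lemma inner_rot_self (x : V2) : ⟪rot x, x⟫ = 0 := by
  rw [rot_apply, PiLp.inner_apply, Fin.sum_univ_two]
  simp [mul_comm]

lemma norm_rot (x : V2) : ‖rot x‖ = ‖x‖ := by
  simp [rot_apply, EuclideanSpace.norm_eq, Fin.sum_univ_two, add_comm]

lemma trace_rot : LinearMap.trace ℝ V2 rot = 0 := by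
  simp [LinearMap.trace_eq_matrix_trace ℝ (EuclideanSpace.basisFun (Fin 2) ℝ).toBasis,
    Matrix.trace, LinearMap.toMatrix_apply, Fin.sum_univ_two, rot_apply]

lemma frobSq_nonneg (L : V2 →L[ℝ] V2) : 0 ≤ frobSq L :=
  Finset.sum_nonneg fun _ _ => Finset.sum_nonneg fun _ _ => sq_nonneg _

lemma norm_apply_le_sqrt_frobSq (L : V2 →L[ℝ] V2) (v : V2) : ‖L v‖ ≤ √(frobSq L) * ‖v‖ := by
  have hrow : ∀ i, L v i = ∑ j, L (EuclideanSpace.single j 1) i * v j := fun i => by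
    conv_lhs => rw [← (EuclideanSpace.basisFun (Fin 2) ℝ).sum_repr v]
    simp [mul_comm]
  refine (sq_le_sq₀ (norm_nonneg _) (by positivity)).1 ?_
  rw [mul_pow, Real.sq_sqrt (frobSq_nonneg L), EuclideanSpace.real_norm_sq_eq,
    EuclideanSpace.real_norm_sq_eq, frobSq, Finset.sum_mul]
  refine Finset.sum_le_sum fun i _ => ?_
  rw [hrow]
  exact Finset.sum_mul_sq_le_sq_mul_sq _ _ _

lemma add_le_sqrt_mul_sqrt (a b : ℝ) : a + b ≤ √(1 + a ^ 2) * √(1 + b ^ 2) := by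
  rw [← Real.sqrt_mul (by positivity)]
  exact Real.le_sqrt_of_sq_le (by nlinarith [sq_nonneg (1 - a * b)])

lemma hasFDerivAt_radial_smul {E F : Type*} [NormedAddCommGroup E] [InnerProductSpace ℝ E]
    [NormedAddCommGroup F] [NormedSpace ℝ F] {φ : ℝ → ℝ} {φ' : ℝ} {x : E} (A : E →L[ℝ] F)
    (hφ : HasDerivAt φ φ' (‖x‖ ^ 2)) :
    HasFDerivAt (fun y => φ (‖y‖ ^ 2) • A y)
      (φ (‖x‖ ^ 2) • A + (φ' • (2 • innerSL ℝ x)).smulRight (A x)) x :=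
  (hφ.comp_hasFDerivAt x (hasStrictFDerivAt_norm_sq x).hasFDerivAt).smul A.hasFDerivAt

lemma norm_vortex_le_one (x : V2) : ‖vortex x‖ ≤ 1 := by
  rw [vortex, norm_smul, norm_inv, norm_norm]
  exact inv_mul_le_one

lemma fderiv_vortex_apply {x : V2} (hx : x ≠ 0) (v : V2) :
    fderiv ℝ vortex x v = ‖x‖⁻¹ • v - (⟪x, v⟫ / ‖x‖ ^ 3) • x := by
  have hr : 0 < ‖x‖ := norm_pos_iff.2 hx
  have hφ : HasDerivAt (fun t => (√t)⁻¹) (-(1 / (2 * ‖x‖)) / ‖x‖ ^ 2) (‖x‖ ^ 2) := by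
    simpa only [Real.sqrt_sq hr.le, Pi.inv_def] using
      (Real.hasDerivAt_sqrt (pow_pos hr 2).ne').inv (Real.sqrt_pos.2 (pow_pos hr 2)).ne'
  have hvortex : vortex = fun y => (√(‖y‖ ^ 2))⁻¹ • ContinuousLinearMap.id ℝ V2 y := by
    ext1 y
    rw [Real.sqrt_sq (norm_nonneg y), vortex, ContinuousLinearMap.id_apply]
  rw [hvortex, (hasFDerivAt_radial_smul _ hφ).fderiv, sub_eq_add_neg, ← neg_smul]
  simp only [add_apply, smul_apply, ContinuousLinearMap.smulRight_apply,
    ContinuousLinearMap.id_apply, Real.sqrt_sq hr.le, innerSL_apply_apply, nsmul_eq_mul,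
    smul_eq_mul, Nat.cast_ofNat]
  congr 2
  field_simp

lemma fderiv_vortex_entry {x : V2} (hx : x ≠ 0) (i j : Fin 2) :
    fderiv ℝ vortex x (EuclideanSpace.single j 1) i =
      (if i = j then ‖x‖⁻¹ else 0) - x i * x j / ‖x‖ ^ 3 := by
  simp only [fderiv_vortex_apply hx, PiLp.sub_apply, PiLp.smul_apply, smul_eq_mul,
    EuclideanSpace.inner_single_right, PiLp.single_apply, mul_ite, mul_one, mul_zero, one_mul,
    conj_trivial]
  ring

lemma norm_sq_eq_add_sq (x : V2) : ‖x‖ ^ 2 = x 0 ^ 2 + x 1 ^ 2 := by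
  rw [EuclideanSpace.real_norm_sq_eq, Fin.sum_univ_two]

lemma frobSq_fderiv_vortex {x : V2} (hx : x ≠ 0) : frobSq (fderiv ℝ vortex x) = 1 / ‖x‖ ^ 2 := by
  have : 0 < ‖x‖ := norm_pos_iff.2 hx
  simp only [frobSq, Fin.sum_univ_two, fderiv_vortex_entry hx, zero_ne_one, one_ne_zero, if_true,
    if_false]
  field_simp
  linear_combination (‖x‖ ^ 2 - x 0 ^ 2 - x 1 ^ 2) * norm_sq_eq_add_sq x

lemma detJ_fderiv_vortex {x : V2} (hx : x ≠ 0) : detJ (fderiv ℝ vortex x) = 0 := by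
  have : 0 < ‖x‖ := norm_pos_iff.2 hx
  simp only [detJ, fderiv_vortex_entry hx, zero_ne_one, one_ne_zero, if_true, if_false]
  field_simp
  linear_combination ‖x‖ ^ 2 * norm_sq_eq_add_sq x

lemma areaIntegrand_nonneg (w : V2 → V2) (x : V2) : 0 ≤ areaIntegrand w x := Real.sqrt_nonneg _

lemma areaIntegrand_vortex {x : V2} (hx : x ≠ 0) : areaIntegrand vortex x = √(1 + 1 / ‖x‖ ^ 2) := by
  rw [areaIntegrand, frobSq_fderiv_vortex hx, detJ_fderiv_vortex hx, zero_pow two_ne_zero, add_zero]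

lemma areaIntegrand_vortex_le {ε : ℝ} (hε : 0 < ε) {x : V2} (hx : ε ≤ ‖x‖) :
    areaIntegrand vortex x ≤ 1 + 1 / ε := by
  rw [areaIntegrand_vortex (norm_pos_iff.1 (hε.trans_le hx)), Real.sqrt_le_left (by positivity)]
  calc 1 + 1 / ‖x‖ ^ 2 ≤ 1 + 1 / ε ^ 2 := by gcongr
    _ ≤ 1 + 1 / ε ^ 2 + 2 / ε := le_add_of_nonneg_right (by positivity)
    _ = (1 + 1 / ε) ^ 2 := by ring

lemma measurable_areaIntegrand (w : V2 → V2) : Measurable (areaIntegrand w) := by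
  have : ∀ i j, Measurable fun x => fderiv ℝ w x (EuclideanSpace.single j 1) i := fun i j =>
    (PiLp.continuous_apply 2 _ i).measurable.comp (measurable_fderiv_apply_const ℝ w _)
  unfold areaIntegrand frobSq detJ
  fun_prop

/-- The rotation field `x ↦ rot x` scaled so that its angular momentum calibrates the graph area of
the vortex map. -/
def calibField (x : V2) : V2 := (‖x‖ ^ 2 * √(1 + ‖x‖ ^ 2))⁻¹ • rot x

lemma fderiv_calibField_rot {x : V2} (hx : x ≠ 0) :
    fderiv ℝ calibField x (rot x) = -(‖x‖ ^ 2 * √(1 + ‖x‖ ^ 2))⁻¹ • x := by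
  have hφ : DifferentiableAt ℝ (fun t : ℝ => (t * √(1 + t))⁻¹) (‖x‖ ^ 2) := by
    have : 0 < ‖x‖ := norm_pos_iff.2 hx
    fun_prop (disch := positivity)
  have hD : HasFDerivAt calibField _ x := hasFDerivAt_radial_smul rot hφ.hasDerivAt
  have hperp : ⟪x, rot x⟫ = 0 := (real_inner_comm _ _).trans (inner_rot_self x)
  simp only [hD.fderiv, add_apply, smul_apply, ContinuousLinearMap.smulRight_apply,
    innerSL_apply_apply, hperp, smul_zero, zero_smul, add_zero, rot_rot, smul_neg, neg_smul]

lemma contDiffAt_calibField {x : V2} (hx : x ≠ 0) : ContDiffAt ℝ 1 calibField x := by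
  have : 0 < ‖x‖ := norm_pos_iff.2 hx
  have hsq : ContDiffAt ℝ 1 (fun y : V2 => ‖y‖ ^ 2) x := (contDiff_norm_sq ℝ).contDiffAt
  have hsqrt := (contDiffAt_const (c := (1 : ℝ)).add hsq).sqrt (by positivity)
  exact ((hsq.mul hsqrt).inv (by positivity)).smul rot.contDiff.contDiffAt

lemma norm_calibField_le (x : V2) : ‖calibField x‖ ≤ ‖x‖⁻¹ := by
  rcases eq_or_ne x 0 with rfl | hx
  · simp [calibField]
  have hr : 0 < ‖x‖ := norm_pos_iff.2 hx
  have hsqrt : 1 ≤ √(1 + ‖x‖ ^ 2) := Real.one_le_sqrt.2 (by nlinarith)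
  rw [calibField, norm_smul, norm_rot, norm_inv, Real.norm_of_nonneg (by positivity)]
  field_simp
  exact hsqrt

lemma inner_calibField_vortex (x : V2) : ⟪calibField x, vortex x⟫ = 0 := by
  rw [calibField, vortex, real_inner_smul_left, real_inner_smul_right, inner_rot_self, mul_zero,
    mul_zero]

lemma abs_inner_calibField_le (x y : V2) : |⟪calibField x, y⟫| ≤ ‖x‖⁻¹ * ‖y - vortex x‖ :=
  calc |⟪calibField x, y⟫| = |⟪calibField x, y - vortex x⟫| := by
        rw [inner_sub_right, inner_calibField_vortex, sub_zero]
    _ ≤ ‖calibField x‖ * ‖y - vortex x‖ := abs_real_inner_le_norm _ _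
    _ ≤ ‖x‖⁻¹ * ‖y - vortex x‖ := by gcongr; exact norm_calibField_le x

lemma inner_calibField_fderiv_add_le_areaIntegrand (w : V2 → V2) {x : V2} (hx : x ≠ 0) :
    ⟪calibField x, fderiv ℝ w x (rot x)⟫ + ‖x‖ / √(1 + ‖x‖ ^ 2) ≤ areaIntegrand w x := by
  have hr : 0 < ‖x‖ := norm_pos_iff.2 hx
  have hinner : ⟪rot x, fderiv ℝ w x (rot x)⟫ ≤ √(frobSq (fderiv ℝ w x)) * ‖x‖ ^ 2 := by
    calc _ ≤ ‖rot x‖ * ‖fderiv ℝ w x (rot x)‖ := real_inner_le_norm _ _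
      _ ≤ ‖rot x‖ * (√(frobSq (fderiv ℝ w x)) * ‖rot x‖) := by
        gcongr; exact norm_apply_le_sqrt_frobSq _ _
      _ = √(frobSq (fderiv ℝ w x)) * ‖x‖ ^ 2 := by rw [norm_rot]; ring
  have harea : √(1 + √(frobSq (fderiv ℝ w x)) ^ 2) ≤ areaIntegrand w x := by
    rw [Real.sq_sqrt (frobSq_nonneg _)]
    exact Real.sqrt_le_sqrt (le_add_of_nonneg_right (sq_nonneg _))
  refine le_trans ?_ harea
  calc _ ≤ (‖x‖ + √(frobSq (fderiv ℝ w x))) / √(1 + ‖x‖ ^ 2) := by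
        rw [calibField, real_inner_smul_left]
        field_simp
        rw [mul_add]
        linarith
    _ ≤ _ := by
        rw [div_le_iff₀ (by positivity), mul_comm]
        exact add_le_sqrt_mul_sqrt _ _

lemma inner_fderiv_calibField_add_le {x : V2} (hx : x ≠ 0) (y : V2) :
    ⟪fderiv ℝ calibField x (rot x), y⟫ + (‖x‖ * √(1 + ‖x‖ ^ 2))⁻¹ ≤ ‖x‖⁻¹ * ‖y - vortex x‖ := by
  have : 0 < ‖x‖ := norm_pos_iff.2 hx
  have hsqrt : 1 ≤ √(1 + ‖x‖ ^ 2) := Real.one_le_sqrt.2 (by nlinarith)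
  have hvortex : ⟪x, vortex x⟫ = ‖x‖ := by
    rw [vortex, real_inner_smul_right, real_inner_self_eq_norm_sq]
    field_simp
  calc _ = (‖x‖ ^ 2 * √(1 + ‖x‖ ^ 2))⁻¹ * -⟪x, y - vortex x⟫ := by
        rw [fderiv_calibField_rot hx, real_inner_smul_left, inner_sub_right, hvortex]
        field_simp
        ring
    _ ≤ (‖x‖ ^ 2 * √(1 + ‖x‖ ^ 2))⁻¹ * (‖x‖ * ‖y - vortex x‖) := by
        gcongr
        exact (neg_le_abs _).trans (abs_real_inner_le_norm _ _)
    _ ≤ (‖x‖ ^ 2 * 1)⁻¹ * (‖x‖ * ‖y - vortex x‖) := by gcongr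
    _ = ‖x‖⁻¹ * ‖y - vortex x‖ := by field_simp

theorem calibration_inequality {w : V2 → V2} {x : V2} (hw : DifferentiableAt ℝ w x) (hx : x ≠ 0) :
    areaIntegrand vortex x + fderiv ℝ (fun y => ⟪calibField y, w y⟫) x (rot x) ≤
      areaIntegrand w x + ‖x‖⁻¹ * ‖w x - vortex x‖ := by
  have hr : 0 < ‖x‖ := norm_pos_iff.2 hx
  have hsplit : areaIntegrand vortex x = ‖x‖ / √(1 + ‖x‖ ^ 2) + (‖x‖ * √(1 + ‖x‖ ^ 2))⁻¹ := by
    have hfrac : 1 + 1 / ‖x‖ ^ 2 = (1 + ‖x‖ ^ 2) / ‖x‖ ^ 2 := by field_simp; ring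
    rw [areaIntegrand_vortex hx, hfrac, Real.sqrt_div (by positivity), Real.sqrt_sq hr.le]
    field_simp
    rw [Real.sq_sqrt (by positivity), add_comm]
  rw [fderiv_inner_apply ℝ ((contDiffAt_calibField hx).differentiableAt one_ne_zero) hw, hsplit]
  linarith [inner_calibField_fderiv_add_le_areaIntegrand w hx,
    inner_fderiv_calibField_add_le hx (w x)]

/-! ### Comparison on a set where the maps are close -/

lemma hausdorffMeasure_sphere_lt_top (c : V2) {r : ℝ} (hr : 0 ≤ r) : μH[1] (sphere c r) < ⊤ := by
  let e := Complex.orthonormalBasisOneI.repr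
  have hlip := e.lipschitz.comp (lipschitzWith_circleMap (e.symm c) r)
  have himage : (e ∘ circleMap (e.symm c) r) '' Set.Ioc 0 (2 * Real.pi) = sphere c r := by
    rw [Set.image_comp, image_circleMap_Ioc, abs_of_nonneg hr, e.image_sphere, e.apply_symm_apply]
  rw [← himage]
  refine (hlip.hausdorffMeasure_image_le zero_le_one _).trans_lt ?_
  rw [hausdorffMeasure_real, Real.volume_Ioc]
  finiteness

lemma volume_eq_zero_of_hausdorffMeasure_lt_top {d : ℕ} {p : ℝ} (hp : p < d)
    {S : Set (EuclideanSpace ℝ (Fin d))} (hS : μH[p] S < ⊤) : volume S = 0 :=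
  Measure.absolutelyContinuous_isAddHaarMeasure volume μH[d]
    ((Measure.hausdorffMeasure_zero_or_top hp S).resolve_right hS.ne)

lemma ofReal_integral_le_lintegral_ofReal {α : Type*} [MeasurableSpace α] {μ : Measure α}
    {f g : α → ℝ} (hf : Integrable f μ) (hfg : f ≤ᵐ[μ] g) :
    ENNReal.ofReal (∫ x, f x ∂μ) ≤ ∫⁻ x, ENNReal.ofReal (g x) ∂μ := by
  rw [integral_eq_lintegral_pos_part_sub_lintegral_neg_part hf]
  refine (ENNReal.ofReal_le_ofReal (sub_le_self _ ENNReal.toReal_nonneg)).trans ?_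
  exact ENNReal.ofReal_toReal_le.trans
    (lintegral_mono_ae (hfg.mono fun x hx => ENNReal.ofReal_le_ofReal hx))

lemma exists_lipschitzOnWith_mul_inner_calibField {A : Set V2} {ε l R : ℝ} (hε : 0 < ε)
    (hA : A ⊆ closedBall 0 l \ ball 0 ε) {w : V2 → V2} {K : ℝ≥0} (hw : LipschitzOnWith K w A)
    (hwR : ∀ x ∈ A, ‖w x‖ ≤ R) {ψ : V2 → ℝ} {C : ℝ≥0} (hψ : LipschitzWith C ψ)
    (hψmem : ∀ x, ψ x ∈ Set.Icc 0 1) :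
    ∃ C', LipschitzOnWith C' (fun x => ψ x * ⟪calibField x, w x⟫) A := by
  let Q : Set (V2 × V2 × ℝ) := (closedBall 0 l \ ball 0 ε) ×ˢ closedBall 0 R ×ˢ Set.Icc 0 1
  have hQ : IsCompact Q := ((isCompact_closedBall 0 l).diff isOpen_ball).prod
    ((isCompact_closedBall 0 R).prod isCompact_Icc)
  have hsmooth : ∀ q ∈ Q,
      ContDiffAt ℝ 1 (fun q : V2 × V2 × ℝ => q.2.2 * ⟪calibField q.1, q.2.1⟫) q := fun q hq => by
    have hq0 : q.1 ≠ 0 := fun h => hq.1.2 (h ▸ mem_ball_self hε)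
    exact contDiffAt_snd.snd.mul
      (((contDiffAt_calibField hq0).comp q contDiffAt_fst).inner ℝ contDiffAt_snd.fst)
  obtain ⟨C', hC'⟩ := exists_lipschitzOnWith_of_isCompact hQ hsmooth
  have hmaps : Set.MapsTo (fun x => (x, w x, ψ x)) A Q := fun x hx =>
    ⟨hA hx, mem_closedBall_zero_iff.2 (hwR x hx), hψmem x⟩
  exact ⟨_, hC'.comp (LipschitzWith.id.lipschitzOnWith.prodMk (hw.prodMk hψ.lipschitzOnWith)) hmaps⟩

lemma cutoff_calibration_inequality {ε l lam : ℝ} (hε : 0 < ε) {x : V2}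
    (hx : x ∈ closedBall 0 l \ ball 0 ε) {w : V2 → V2} (hw : DifferentiableAt ℝ w x)
    (hwx : ‖w x - vortex x‖ ≤ lam) {ψ : V2 → ℝ} (hψ : DifferentiableAt ℝ ψ x)
    (hψx : ψ x ∈ Set.Icc 0 1) :
    areaIntegrand vortex x + fderiv ℝ (fun y => ψ y * ⟪calibField y, w y⟫) x (rot x) ≤
      areaIntegrand w x +
        ((1 + 1 / ε) * (1 - ψ x) + l * lam / ε * ‖fderiv ℝ ψ x‖ + lam / ε) := by
  have hεx : ε ≤ ‖x‖ := by simpa using hx.2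
  have hxl : ‖x‖ ≤ l := by simpa using hx.1
  have hx0 : x ≠ 0 := norm_pos_iff.1 (hε.trans_le hεx)
  have hP : DifferentiableAt ℝ (fun y => ⟪calibField y, w y⟫) x :=
    ((contDiffAt_calibField hx0).differentiableAt one_ne_zero).inner ℝ hw
  have hdev : ‖x‖⁻¹ * ‖w x - vortex x‖ ≤ lam / ε := by
    rw [div_eq_inv_mul]; gcongr
  have hcalib := mul_le_mul_of_nonneg_left (calibration_inequality hw hx0) hψx.1
  have hvortex := mul_le_mul_of_nonneg_right (areaIntegrand_vortex_le hε hεx) (sub_nonneg.2 hψx.2)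
  have harea : ψ x * (areaIntegrand w x + ‖x‖⁻¹ * ‖w x - vortex x‖) ≤ areaIntegrand w x + lam / ε :=
    (mul_le_of_le_one_left (add_nonneg (areaIntegrand_nonneg w x) (by positivity)) hψx.2).trans
      (add_le_add_right hdev _)
  have hgrad : ⟪calibField x, w x⟫ * fderiv ℝ ψ x (rot x) ≤ l * lam / ε * ‖fderiv ℝ ψ x‖ :=
    calc _ ≤ |⟪calibField x, w x⟫| * ‖fderiv ℝ ψ x (rot x)‖ := by
          rw [Real.norm_eq_abs, ← abs_mul]; exact le_abs_self _
      _ ≤ lam / ε * (‖fderiv ℝ ψ x‖ * l) := by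
          gcongr
          · exact (by positivity : 0 ≤ ‖x‖⁻¹ * ‖w x - vortex x‖).trans hdev
          · exact (abs_inner_calibField_le x (w x)).trans hdev
          · exact ((fderiv ℝ ψ x).le_opNorm _).trans (by rw [norm_rot]; gcongr)
      _ = _ := by ring
  rw [fderiv_fun_mul hψ hP]
  simp only [add_apply, smul_apply, smul_eq_mul]
  linarith

/-- The factor in front of `λ (ℋ¹(∂A) + 1)` in the cost of comparing the graph of the vortex map
over `A`, a subset of the annulus of radii `ε` and `l`, with that of a map `λ`-close to it on
`A`. -/
def frontierConst (ε l : ℝ) : ℝ := 4 * Real.pi * (1 + 1 / ε + l / ε) + Real.pi * l ^ 2 / ε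

lemma frontierConst_pos {ε l : ℝ} (hε : 0 < ε) (hl : 0 ≤ l) : 0 < frontierConst ε l := by
  unfold frontierConst
  positivity

lemma lintegral_ofReal_affine {α : Type*} [MeasurableSpace α] {μ : Measure α} {f g : α → ℝ}
    (hf : Measurable f) (hg : Measurable g) (hf0 : 0 ≤ f) (hg0 : 0 ≤ g) {a b c : ℝ} (ha : 0 ≤ a)
    (hb : 0 ≤ b) (hc : 0 ≤ c) :
    ∫⁻ x, ENNReal.ofReal (a * f x + b * g x + c) ∂μ =
      ENNReal.ofReal a * (∫⁻ x, ENNReal.ofReal (f x) ∂μ) +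
        ENNReal.ofReal b * (∫⁻ x, ENNReal.ofReal (g x) ∂μ) + ENNReal.ofReal c * μ Set.univ := by
  have hsplit : ∀ x, ENNReal.ofReal (a * f x + b * g x + c) =
      ENNReal.ofReal a * ENNReal.ofReal (f x) + ENNReal.ofReal b * ENNReal.ofReal (g x) +
        ENNReal.ofReal c := fun x => by
    have hfx := mul_nonneg ha (hf0 x)
    have hgx := mul_nonneg hb (hg0 x)
    rw [ENNReal.ofReal_add (add_nonneg hfx hgx) hc, ENNReal.ofReal_add hfx hgx,
      ENNReal.ofReal_mul ha, ENNReal.ofReal_mul hb]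
  simp only [hsplit]
  rw [lintegral_add_right _ measurable_const, lintegral_add_right _ (by fun_prop),
    lintegral_const_mul _ (by fun_prop), lintegral_const_mul _ (by fun_prop), lintegral_const]

lemma setLIntegral_cutoff_error_le {A : Set V2} {ε l lam h : ℝ} (hε : 0 < ε) (hl : 0 ≤ l)
    (hlam : 0 ≤ lam) (hh : 0 ≤ h) (hA : A ⊆ closedBall 0 l) {ψ : V2 → ℝ} (hψ : Continuous ψ)
    (hψmem : ∀ x, ψ x ∈ Set.Icc 0 1)
    (hψint : ∫⁻ x, ENNReal.ofReal (1 - ψ x) ≤ ENNReal.ofReal (4 * Real.pi * lam * (h + 1)))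
    (hψgrad : ∫⁻ x, ENNReal.ofReal ‖fderiv ℝ ψ x‖ ≤ ENNReal.ofReal (4 * Real.pi * (h + 1))) :
    ∫⁻ x in A, ENNReal.ofReal
        ((1 + 1 / ε) * (1 - ψ x) + l * lam / ε * ‖fderiv ℝ ψ x‖ + lam / ε) ≤
      ENNReal.ofReal (frontierConst ε l * (lam * (h + 1))) := by
  have hvol : volume A ≤ ENNReal.ofReal (Real.pi * l ^ 2) := by
    rw [mul_comm, ENNReal.ofReal_mul (by positivity), ENNReal.ofReal_pow hl]
    exact (measure_mono hA).trans_eq (EuclideanSpace.volume_closedBall_fin_two _ _)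
  calc _ = ENNReal.ofReal (1 + 1 / ε) * (∫⁻ x in A, ENNReal.ofReal (1 - ψ x)) +
          ENNReal.ofReal (l * lam / ε) * (∫⁻ x in A, ENNReal.ofReal ‖fderiv ℝ ψ x‖) +
          ENNReal.ofReal (lam / ε) * volume A := by
        rw [lintegral_ofReal_affine (f := fun x => 1 - ψ x) (hψ.measurable.const_sub 1)
          (measurable_fderiv ℝ ψ).norm (fun x => sub_nonneg.2 (hψmem x).2)
          (fun x => norm_nonneg _) (by positivity) (by positivity) (by positivity),
          Measure.restrict_apply_univ]
    _ ≤ ENNReal.ofReal (1 + 1 / ε) * ENNReal.ofReal (4 * Real.pi * lam * (h + 1)) +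
          ENNReal.ofReal (l * lam / ε) * ENNReal.ofReal (4 * Real.pi * (h + 1)) +
          ENNReal.ofReal (lam / ε) * ENNReal.ofReal (Real.pi * l ^ 2) := by
        gcongr
        · exact (setLIntegral_le_lintegral _ _).trans hψint
        · exact (setLIntegral_le_lintegral _ _).trans hψgrad
    _ ≤ _ := by
        rw [← ENNReal.ofReal_mul (by positivity), ← ENNReal.ofReal_mul (by positivity),
          ← ENNReal.ofReal_mul (by positivity),
          ← ENNReal.ofReal_add (by positivity) (by positivity),
          ← ENNReal.ofReal_add (by positivity) (by positivity), frontierConst]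
        refine ENNReal.ofReal_le_ofReal ?_
        have : 0 ≤ lam * h * (Real.pi * l ^ 2 / ε) := by positivity
        linear_combination this

lemma integrableOn_areaIntegrand_vortex {A : Set V2} {ε l : ℝ} (hε : 0 < ε) (hA : MeasurableSet A)
    (hAε : A ⊆ closedBall 0 l \ ball 0 ε) : IntegrableOn (areaIntegrand vortex) A := by
  have hfin : volume A < ⊤ := (measure_mono (hAε.trans Set.sdiff_subset)).trans_lt
    measure_closedBall_lt_top
  refine Measure.integrableOn_of_bounded hfin.ne
    (measurable_areaIntegrand vortex).aestronglyMeasurable (M := 1 + 1 / ε) ?_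
  filter_upwards [ae_restrict_mem hA] with x hx
  rw [Real.norm_of_nonneg (areaIntegrand_nonneg vortex x)]
  exact areaIntegrand_vortex_le hε (by simpa using (hAε hx).2)

lemma graphArea_vortex_le_add_setLIntegral {A U : Set V2} {ε l lam : ℝ} (hε : 0 < ε)
    (hA : IsOpen A) (hAε : A ⊆ closedBall 0 l \ ball 0 ε) {w : V2 → V2} {K : ℝ≥0}
    (hw : LipschitzOnWith K w A) (hwv : ∀ x ∈ A, ‖w x - vortex x‖ ≤ lam) {ψ : V2 → ℝ} {C : ℝ≥0}
    (hψ : LipschitzWith C ψ) (hψmem : ∀ x, ψ x ∈ Set.Icc 0 1) (hU : IsOpen U)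
    (hAU : frontier A ⊆ U) (hψU : ∀ x ∈ U, ψ x = 0) :
    graphArea vortex A ≤ graphArea w A + ∫⁻ x in A, ENNReal.ofReal
      ((1 + 1 / ε) * (1 - ψ x) + l * lam / ε * ‖fderiv ℝ ψ x‖ + lam / ε) := by
  have hwR : ∀ x ∈ A, ‖w x‖ ≤ 1 + lam := fun x hx =>
    (norm_le_norm_add_norm_sub' _ (vortex x)).trans (add_le_add (norm_vortex_le_one x) (hwv x hx))
  obtain ⟨C', hG⟩ := exists_lipschitzOnWith_mul_inner_calibField hε hAε hw hwR hψ hψmem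
  have hGU : ∀ x ∈ A ∩ U, ψ x * ⟪calibField x, w x⟫ = 0 := fun x hx => by
    rw [hψU x hx.2, zero_mul]
  have hAb : Bornology.IsBounded A := isBounded_closedBall.subset (hAε.trans Set.sdiff_subset)
  have hvortex := integrableOn_areaIntegrand_vortex hε hA.measurableSet hAε
  have hGint := integrableOn_fderiv_apply_clm (μ := volume) hG hA hAb hU hAU hGU rot
  have hGzero := setIntegral_fderiv_apply_clm (μ := volume) hG hA hAb hU hAU hGU rot
  rw [trace_rot, neg_zero, zero_mul] at hGzero
  have hdiff : ∀ᵐ x ∂volume.restrict A, areaIntegrand vortex x +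
      fderiv ℝ (fun y => ψ y * ⟪calibField y, w y⟫) x (rot x) ≤ areaIntegrand w x +
        ((1 + 1 / ε) * (1 - ψ x) + l * lam / ε * ‖fderiv ℝ ψ x‖ + lam / ε) := by
    filter_upwards [ae_restrict_mem hA.measurableSet,
      ae_restrict_of_ae hw.ae_differentiableWithinAt_of_mem,
      ae_restrict_of_ae hψ.ae_differentiableAt] with x hx hwx hψx
    exact cutoff_calibration_inequality hε (hAε hx)
      ((hwx hx).differentiableAt (hA.mem_nhds hx)) (hwv x hx) hψx (hψmem x)
  calc graphArea vortex A = ENNReal.ofReal (∫ x in A, areaIntegrand vortex x) :=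
        (ofReal_integral_eq_lintegral_ofReal hvortex
          (.of_forall fun x => areaIntegrand_nonneg vortex x)).symm
    _ = ENNReal.ofReal (∫ x in A, (areaIntegrand vortex x +
          fderiv ℝ (fun y => ψ y * ⟪calibField y, w y⟫) x (rot x))) := by
        rw [integral_add hvortex hGint, hGzero, add_zero]
    _ ≤ _ := ofReal_integral_le_lintegral_ofReal (hvortex.add hGint) hdiff
    _ ≤ _ := lintegral_mono fun x => ENNReal.ofReal_add_le
    _ = _ := lintegral_add_left (measurable_areaIntegrand w).ennreal_ofReal _

theorem graphArea_vortex_le_of_norm_sub_le {A : Set V2} {ε l lam : ℝ} (hε : 0 < ε) (hl : 0 ≤ l)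
    (hlam : 0 < lam) (hA : IsOpen A) (hAε : A ⊆ closedBall 0 l \ ball 0 ε) {w : V2 → V2} {K : ℝ≥0}
    (hw : LipschitzOnWith K w A) (hwv : ∀ x ∈ A, ‖w x - vortex x‖ ≤ lam) :
    graphArea vortex A ≤ graphArea w A + ENNReal.ofReal (frontierConst ε l) *
      (ENNReal.ofReal lam * (μH[1] (frontier A) + 1)) := by
  rcases eq_top_or_lt_top (μH[1] (frontier A)) with htop | hfin
  · rw [htop, top_add, ENNReal.mul_top (by simpa), ENNReal.mul_top
      (by simpa using frontierConst_pos hε hl), add_top]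
    exact le_top
  have hcompact : IsCompact (frontier A) := ((isBounded_closedBall.subset
    (hAε.trans Set.sdiff_subset)).isCompact_closure).of_isClosed_subset isClosed_frontier
      frontier_subset_closure
  obtain ⟨ψ, C, U, hψ, hψmem, hU, hAU, hψU, hψint, hψgrad⟩ :=
    exists_cutoff_of_hausdorffMeasure_lt_top hcompact hfin hlam
  have herr := setLIntegral_cutoff_error_le hε hl hlam.le ENNReal.toReal_nonneg
    (hAε.trans Set.sdiff_subset) hψ.continuous hψmem hψint hψgrad
  rw [ENNReal.ofReal_mul (frontierConst_pos hε hl).le, ENNReal.ofReal_mul hlam.le,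
    ENNReal.ofReal_add ENNReal.toReal_nonneg zero_le_one, ENNReal.ofReal_toReal hfin.ne,
    ENNReal.ofReal_one] at herr
  exact (graphArea_vortex_le_add_setLIntegral hε hA hAε hw hwv hψ hψmem hU hAU hψU).trans
    (by gcongr)

/-! ### Good and bad sets in an annulus -/

lemma frontier_inter_preimage_Iio_subset {X : Type*} [TopologicalSpace X] {Ω : Set X}
    (hΩ : IsOpen Ω) {f : X → ℝ} (hf : ContinuousOn f Ω) (c : ℝ) :
    frontier (Ω ∩ f ⁻¹' Set.Iio c) ⊆ frontier Ω ∪ (Ω ∩ f ⁻¹' {c}) := by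
  rw [(hf.isOpen_inter_preimage hΩ isOpen_Iio).frontier_eq, hΩ.frontier_eq]
  rintro x ⟨hx, hxA⟩
  by_cases hxΩ : x ∈ Ω
  · have hle : f x ≤ c := le_of_tendsto_of_frequently (hf.continuousAt (hΩ.mem_nhds hxΩ)).tendsto
      ((mem_closure_iff_frequently.1 hx).mono fun y hy => hy.2.le)
    exact Or.inr ⟨hxΩ, hle.antisymm (not_lt.1 fun h => hxA ⟨hxΩ, h⟩)⟩
  · exact Or.inl ⟨closure_mono Set.inter_subset_left hx, hxΩ⟩

lemma frontier_ball_diff_closedBall_subset {X : Type*} [PseudoMetricSpace X] (c : X) (r ε : ℝ) :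
    frontier (ball c r \ closedBall c ε) ⊆ sphere c r ∪ sphere c ε := by
  rw [Set.sdiff_eq]
  refine (frontier_inter_subset _ _).trans (Set.union_subset_union ?_ ?_)
  · exact Set.inter_subset_left.trans frontier_ball_subset_sphere
  · rw [frontier_compl]
    exact Set.inter_subset_right.trans frontier_closedBall_subset_sphere

/-- The set `{x ∈ B_l \ {0} : |w(x) - u(x)| = c}`, for `u` the vortex map. -/
def vortexLevelSet (w : V2 → V2) (l c : ℝ) : Set V2 :=
  {x | x ∈ ball 0 l \ {0} ∧ ‖w x - vortex x‖ = c}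

/-- The set `{x ∈ B_l \ {0} : |w(x) - u(x)| > c}`, for `u` the vortex map. -/
def vortexBadSet (w : V2 → V2) (l c : ℝ) : Set V2 :=
  {x | x ∈ ball 0 l \ {0} ∧ c < ‖w x - vortex x‖}

lemma graphArea_vortex_le_volume {ε : ℝ} (hε : 0 < ε) {E : Set V2} (hE : ∀ x ∈ E, ε ≤ ‖x‖) :
    graphArea vortex E ≤ ENNReal.ofReal (1 + 1 / ε) * volume E :=
  (setLIntegral_mono measurable_const fun x hx =>
    ENNReal.ofReal_le_ofReal (areaIntegrand_vortex_le hε (hE x hx))).trans_eq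
      (setLIntegral_const _ _)

lemma graphArea_mono (v : V2 → V2) {E F : Set V2} (h : E ⊆ F) : graphArea v E ≤ graphArea v F :=
  lintegral_mono_set h

lemma graphArea_union_le (v : V2 → V2) (E F : Set V2) :
    graphArea v (E ∪ F) ≤ graphArea v E + graphArea v F :=
  lintegral_union_le _ _ _

section Annulus

variable {ε l lam : ℝ} {w : V2 → V2} {K : ℝ≥0}

lemma mem_annulus_iff {x : V2} : x ∈ ball 0 l \ closedBall 0 ε ↔ ‖x‖ < l ∧ ε < ‖x‖ := by
  simp

lemma continuousOn_norm_sub_vortex (hε : 0 ≤ ε) (hw : ContinuousOn w (ball 0 l)) :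
    ContinuousOn (fun x => ‖w x - vortex x‖) (ball 0 l \ closedBall 0 ε) := by
  have hvortex : ContinuousOn vortex (ball 0 l \ closedBall 0 ε) :=
    (continuousOn_id.norm.inv₀ fun x hx => (hε.trans_lt (mem_annulus_iff.1 hx).2).ne').smul
      continuousOn_id
  exact ((hw.mono Set.sdiff_subset).sub hvortex).norm

lemma annulus_diff_zero_subset (hε : 0 ≤ ε) :
    ball (0 : V2) l \ closedBall 0 ε ⊆ ball 0 l \ {0} :=
  Set.sdiff_subset_sdiff_right (Set.singleton_subset_iff.2 (mem_closedBall_self hε))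

lemma hausdorffMeasure_frontier_le (hε : 0 ≤ ε) (hw : ContinuousOn w (ball 0 l)) :
    μH[1] (frontier ((ball 0 l \ closedBall 0 ε) ∩ (fun x => ‖w x - vortex x‖) ⁻¹' Set.Iio lam)) ≤
      μH[1] (vortexLevelSet w l lam) + μH[1] (sphere (0 : V2) l ∪ sphere 0 ε) := by
  rw [add_comm]
  refine (measure_mono ?_).trans (measure_union_le _ _)
  refine (frontier_inter_preimage_Iio_subset (isOpen_ball.sdiff isClosed_closedBall)
    (continuousOn_norm_sub_vortex hε hw) lam).trans (Set.union_subset_union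
      (frontier_ball_diff_closedBall_subset _ _ _) fun x hx => ?_)
  exact ⟨annulus_diff_zero_subset hε hx.1, hx.2⟩

lemma annulus_subset_union (hε : 0 ≤ ε) :
    ball 0 l \ closedBall 0 ε ⊆
      ((ball 0 l \ closedBall 0 ε) ∩ (fun x => ‖w x - vortex x‖) ⁻¹' Set.Iio lam) ∪
        ((ball 0 l \ closedBall 0 ε) ∩ vortexBadSet w l lam ∪ vortexLevelSet w l lam) := by
  intro x hx
  rcases lt_trichotomy ‖w x - vortex x‖ lam with h | h | h
  · exact Or.inl ⟨hx, h⟩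
  · exact Or.inr (Or.inr ⟨annulus_diff_zero_subset hε hx, h⟩)
  · exact Or.inr (Or.inl ⟨hx, annulus_diff_zero_subset hε hx, h⟩)

theorem graphArea_vortex_annulus_le (hε : 0 < ε) (hl : 0 ≤ l) (hlam : 0 < lam)
    (hw : LipschitzOnWith K w (ball 0 l)) :
    graphArea vortex (ball 0 l \ closedBall 0 ε) ≤ graphArea w (ball 0 l \ vortexBadSet w l lam) +
      ENNReal.ofReal (1 + 1 / ε) * volume (vortexBadSet w l lam) +
      ENNReal.ofReal (frontierConst ε l) * (ENNReal.ofReal lam *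
        (μH[1] (vortexLevelSet w l lam) + (μH[1] (sphere (0 : V2) l ∪ sphere 0 ε) + 1))) := by
  rcases eq_top_or_lt_top (μH[1] (vortexLevelSet w l lam)) with htop | hfin
  · rw [htop, top_add, ENNReal.mul_top (by simpa), ENNReal.mul_top
      (by simpa using frontierConst_pos hε hl), add_top]
    exact le_top
  set A : Set V2 := (ball 0 l \ closedBall 0 ε) ∩ (fun x => ‖w x - vortex x‖) ⁻¹' Set.Iio lam
  have hA : IsOpen A := (continuousOn_norm_sub_vortex hε.le hw.continuousOn).isOpen_inter_preimage
    (isOpen_ball.sdiff isClosed_closedBall) isOpen_Iio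
  have hAε : A ⊆ closedBall 0 l \ ball 0 ε := Set.inter_subset_left.trans
    (Set.sdiff_subset_sdiff ball_subset_closedBall ball_subset_closedBall)
  have hgood : graphArea vortex A ≤ _ := graphArea_vortex_le_of_norm_sub_le hε hl hlam hA hAε
    (hw.mono (Set.inter_subset_left.trans Set.sdiff_subset)) fun x hx => le_of_lt hx.2
  have hAD : A ⊆ ball 0 l \ vortexBadSet w l lam := fun x hx =>
    ⟨hx.1.1, fun hxD => lt_asymm hxD.2 hx.2⟩
  have hbad := graphArea_vortex_le_volume hε
    (E := (ball 0 l \ closedBall 0 ε) ∩ vortexBadSet w l lam)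
    fun x hx => (mem_annulus_iff.1 hx.1).2.le
  have hlevel : graphArea vortex (vortexLevelSet w l lam) = 0 := setLIntegral_measure_zero _ _
    (volume_eq_zero_of_hausdorffMeasure_lt_top (by norm_num) hfin)
  calc _ ≤ graphArea vortex A + (graphArea vortex ((ball 0 l \ closedBall 0 ε) ∩
          vortexBadSet w l lam) + graphArea vortex (vortexLevelSet w l lam)) :=
        (graphArea_mono _ (annulus_subset_union hε.le)).trans <|
          (graphArea_union_le _ _ _).trans <| add_le_add_right (graphArea_union_le _ _ _) _
    _ ≤ (graphArea w (ball 0 l \ vortexBadSet w l lam) + ENNReal.ofReal (frontierConst ε l) *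
          (ENNReal.ofReal lam * (μH[1] (vortexLevelSet w l lam) +
            μH[1] (sphere (0 : V2) l ∪ sphere 0 ε) + 1))) +
          (ENNReal.ofReal (1 + 1 / ε) * volume (vortexBadSet w l lam) + 0) := by
        rw [hlevel]
        gcongr
        · refine hgood.trans (add_le_add (graphArea_mono w hAD) ?_)
          gcongr
          exact hausdorffMeasure_frontier_le hε.le hw.continuousOn
        · exact hbad.trans (by gcongr; exact Set.inter_subset_right)
    _ = _ := by rw [add_zero, add_right_comm, add_assoc (μH[1] _)]

end Annulus

lemma limsup_measure_le_of_tendsto_integral {α : Type*} [MeasurableSpace α] {μ : Measure α}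
    {D : ℕ → Set α} (hD : ∀ k, μ (D k) ≠ ⊤) {a : ℝ} {c : ℝ} (hac : a ≤ c)
    (hlim : Tendsto (fun k => ∫ _ in D k, 1 ∂μ) atTop (𝓝 a)) :
    limsup (fun k => μ (D k)) atTop ≤ ENNReal.ofReal c := by
  simp only [setIntegral_const, smul_eq_mul, mul_one] at hlim
  have hlim' := ENNReal.tendsto_ofReal hlim
  simp only [ofReal_measureReal (hD _)] at hlim'
  exact hlim'.limsup_eq.trans_le (ENNReal.ofReal_le_ofReal hac)

lemma sub_const_mul_limsup_le_liminf {ι : Type*} {F : Filter ι} [F.NeBot] {a c : ℝ≥0∞} (ha : a ≠ ⊤)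
    (hc : c ≠ ⊤) {b d e : ι → ℝ≥0∞} (habde : ∀ i, a ≤ b i + c * d i + e i)
    (he : Tendsto e F (𝓝 0)) : a - c * limsup d F ≤ liminf b F :=
  calc a - c * limsup d F = liminf (fun i => a - c * d i) F := by
        rw [ENNReal.liminf_const_sub F _ ha, ENNReal.limsup_const_mul_of_ne_top hc]
    _ ≤ liminf (b + e) F := liminf_le_liminf <| .of_forall fun i =>
        tsub_le_iff_right.2 ((habde i).trans_eq (add_right_comm _ _ _))
    _ = liminf b F := ENNReal.liminf_add_of_right_tendsto_zero he b

lemma ofReal_integral_annulus_eq_graphArea_vortex {ε l : ℝ} (hε : 0 < ε) :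
    ENNReal.ofReal (∫ x in ball (0 : V2) l \ closedBall 0 ε, √(1 + frobSq (fderiv ℝ vortex x))) =
      graphArea vortex (ball 0 l \ closedBall 0 ε) := by
  have hmeas : MeasurableSet (ball (0 : V2) l \ closedBall 0 ε) :=
    measurableSet_ball.diff measurableSet_closedBall
  have hcongr : ∀ x ∈ ball (0 : V2) l \ closedBall 0 ε,
      √(1 + frobSq (fderiv ℝ vortex x)) = areaIntegrand vortex x := fun x hx => by
    rw [areaIntegrand, detJ_fderiv_vortex (annulus_diff_zero_subset hε.le hx).2,
      zero_pow two_ne_zero, add_zero]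
  rw [setIntegral_congr_fun hmeas hcongr]
  exact ofReal_integral_eq_lintegral_ofReal (integrableOn_areaIntegrand_vortex hε hmeas
    (Set.sdiff_subset_sdiff ball_subset_closedBall ball_subset_closedBall))
    (.of_forall fun x => areaIntegrand_nonneg vortex x)

theorem liminf_area_on_good_set_ge_general {ε l : ℝ} (hε : 0 < ε) (hl : 0 ≤ l) {u : ℕ → V2 → V2}
    {K : ℕ → ℝ≥0} (hu : ∀ k, LipschitzOnWith (K k) (u k) (ball 0 l)) {lam : ℕ → ℝ}
    (hlam : ∀ k, 0 < lam k) (hlam0 : Tendsto lam atTop (𝓝 0))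
    (hlevel : Tendsto (fun k => ENNReal.ofReal (lam k) * μH[1] (vortexLevelSet (u k) l (lam k)))
      atTop (𝓝 0))
    {c : ℝ} (hc : 0 ≤ c)
    (hbad : limsup (fun k => volume (vortexBadSet (u k) l (lam k))) atTop ≤ ENNReal.ofReal c) :
    ENNReal.ofReal ((∫ x in ball (0 : V2) l \ closedBall 0 ε, √(1 + frobSq (fderiv ℝ vortex x))) -
        (1 + 1 / ε) * c) ≤
      liminf (fun k => graphArea (u k) (ball 0 l \ vortexBadSet (u k) l (lam k))) atTop := by
  have hspheres : μH[1] (sphere (0 : V2) l ∪ sphere 0 ε) < ⊤ := measure_union_lt_top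
    (hausdorffMeasure_sphere_lt_top 0 hl) (hausdorffMeasure_sphere_lt_top 0 hε.le)
  have hlam_mul : Tendsto (fun k => ENNReal.ofReal (lam k) *
      (μH[1] (sphere (0 : V2) l ∪ sphere 0 ε) + 1)) atTop (𝓝 0) := by
    simpa using ENNReal.Tendsto.mul_const (ENNReal.tendsto_ofReal hlam0)
      (Or.inr (ENNReal.add_lt_top.2 ⟨hspheres, ENNReal.one_lt_top⟩).ne)
  have hfrontier : Tendsto (fun k => ENNReal.ofReal (frontierConst ε l) * (ENNReal.ofReal (lam k) *
      (μH[1] (vortexLevelSet (u k) l (lam k)) + (μH[1] (sphere (0 : V2) l ∪ sphere 0 ε) + 1))))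
      atTop (𝓝 0) := by
    simpa only [mul_add, add_zero, mul_zero] using
      ENNReal.Tendsto.const_mul (hlevel.add hlam_mul) (Or.inr ENNReal.ofReal_ne_top)
  rw [ENNReal.ofReal_sub _ (by positivity), ENNReal.ofReal_mul (by positivity)]
  have hannulus := ofReal_integral_annulus_eq_graphArea_vortex (l := l) hε
  have hmain := sub_const_mul_limsup_le_liminf ENNReal.ofReal_ne_top ENNReal.ofReal_ne_top
    (fun k => hannulus.trans_le (graphArea_vortex_annulus_le hε hl (hlam k) (hu k))) hfrontier
  exact le_trans (by gcongr) hmain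

/-- Estimate from below of the graph area of `u_k` over `B_l \ D_k`:
given the choice of levels `λ_k` and the weak-* limit density `ζ` of the bad sets `D_k`,
for every `ε ∈ (0, l)` the liminf of the areas of the graphs of `u_k` over `B_l \ D_k`
is at least `∫_{B_l \ closure(B_ε)} √(1 + |∇u|²) dx − 1/n − 2/(εn)`. -/
theorem liminf_area_on_good_set_ge (l : ℝ) (hl : 0 < l) (n : ℕ) (hn : 1 ≤ n)
    (u : ℕ → V2 → V2) (K : ℕ → ℝ≥0)
    (hLip : ∀ k, LipschitzOnWith (K k) (u k) (ball (0 : V2) l))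
    (hval : ∀ k, ∀ x ∈ ball (0 : V2) l, ‖u k x‖ ≤ 1)
    (hgrad : (⨆ k, ∫⁻ x in ball (0 : V2) l,
        ENNReal.ofReal (Real.sqrt (frobSq (fderiv ℝ (u k) x)))) < ⊤)
    (lam : ℕ → ℝ) (hanti : StrictAnti lam) (hmem : ∀ k, lam k ∈ Set.Ioo (0 : ℝ) 2)
    (hlam0 : Tendsto lam atTop (𝓝 0))
    (hH : ∀ k, μH[1] {x : V2 | x ∈ ball (0 : V2) l \ {0} ∧ ‖u k x - vortex x‖ = lam k} < ⊤)
    (hHlim : Tendsto (fun k => ENNReal.ofReal (lam k) *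
        μH[1] {x : V2 | x ∈ ball (0 : V2) l \ {0} ∧ ‖u k x - vortex x‖ = lam k})
      atTop (𝓝 0))
    (D : ℕ → Set V2)
    (hD : ∀ k, D k = {x : V2 | x ∈ ball (0 : V2) l \ {0} ∧ lam k < ‖u k x - vortex x‖})
    (ζ : V2 → ℝ) (hζmeas : Measurable ζ) (hζmem : ∀ x, ζ x ∈ Set.Icc (0 : ℝ) 1)
    (hζint : ∫ x in ball (0 : V2) l, ζ x ≤ 1 / (n : ℝ))
    (hconv : ∀ g : V2 → ℝ, Integrable g (volume.restrict (ball (0 : V2) l)) →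
      Tendsto (fun k => ∫ x in D k, g x) atTop (𝓝 (∫ x in ball (0 : V2) l, ζ x * g x)))
    (ε : ℝ) (hε : ε ∈ Set.Ioo 0 l) :
    ENNReal.ofReal
        ((∫ x in ball (0 : V2) l \ closedBall (0 : V2) ε,
            Real.sqrt (1 + frobSq (fderiv ℝ vortex x))) - 1 / (n : ℝ) - 2 / (ε * (n : ℝ)))
      ≤ Filter.liminf
          (fun k => ∫⁻ x in ball (0 : V2) l \ D k, ENNReal.ofReal (areaIntegrand (u k) x))
          atTop := by
  obtain rfl : D = fun k => vortexBadSet (u k) l (lam k) := funext hD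
  have hbad : limsup (fun k => volume (vortexBadSet (u k) l (lam k))) atTop ≤
      ENNReal.ofReal (1 / n) := by
    refine limsup_measure_le_of_tendsto_integral (fun k => ?_) hζint
      (by simpa only [mul_one] using hconv (fun _ => 1) (integrableOn_const measure_ball_lt_top.ne))
    exact measure_ne_top_of_subset (fun x hx => hx.1.1) measure_ball_lt_top.ne
  have hcost : (1 + 1 / ε) * (1 / n) ≤ 1 / n + 2 / (ε * n) := by
    have hslack : 0 ≤ 1 / (ε * n) := one_div_nonneg.2 (mul_nonneg hε.1.le n.cast_nonneg)
    linear_combination hslack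
  exact (ENNReal.ofReal_le_ofReal (by linarith)).trans <|
    liminf_area_on_good_set_ge_general hε.1 hl.le hLip (fun k => (hmem k).1) hlam0 hHlim
      (by positivity) hbad
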